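/- Assume the sequences are completely asynchronous, i.e., t¹_i ≠ t²_j for all i, j, and satisfy the boundary overlap conditions max(t¹_0, t²_0) < min(t¹_1, t²_1) and max(t¹_{M₁−1}, t²_{M₂−1}) < min(t¹_{M₁}, t²_{M₂}). Fix i with 1 < i < M₁, and define t²_{(i−1)+} := min{t²_v : t²_v > t¹_{i−1}} and t²_{i−} := max{t²_v : t²_v < t¹_i} (both sets are nonempty under the stated conditions). Then for every j with 1 < j < M₂ − 1 such that t¹_{i−1} < t²_j < t¹_i, the point t²_j is nonextant if and only if t²_{(i−1)+} < t²_j < t²_{i−}; i.e., the nonextant points of the second sequence lying between the consecutive observation times t¹_{i−1} and t¹_i are precisely those in the open interval (t²_{(i−1)+}, t²_{i−}). -/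

import Mathlib

open Classical in
/-- Indicator `χ(i,j)` of the event that the observation intervals
`(t¹_{i-1}, t¹_i]` and `(t²_{j-1}, t²_j]` overlap. -/
noncomputable def chi (t₁ t₂ : ℕ → ℝ) (i j : ℕ) : ℝ :=
  if (Set.Ioc (t₁ (i - 1)) (t₁ i) ∩ Set.Ioc (t₂ (j - 1)) (t₂ j)).Nonempty then 1 else 0

/-- The Hayashi–Yoshida double sum for price functions `P₁, P₂` and observation
times `t₁ 0 < ⋯ < t₁ M₁` and `t₂ 0 < ⋯ < t₂ M₂`. -/
noncomputable def HY (M₁ M₂ : ℕ) (t₁ t₂ : ℕ → ℝ) (P₁ P₂ : ℝ → ℝ) : ℝ :=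
  ∑ i ∈ Finset.Icc 1 M₁, ∑ j ∈ Finset.Icc 1 M₂,
    (P₁ (t₁ i) - P₁ (t₁ (i - 1))) * (P₂ (t₂ j) - P₂ (t₂ (j - 1))) * chi t₁ t₂ i j

/-- The observation time `t₂ j` is *nonextant* if the Hayashi–Yoshida sum does not
depend on the value of the second price function at `t₂ j`. -/
def Nonextant (M₁ M₂ : ℕ) (t₁ t₂ : ℕ → ℝ) (j : ℕ) : Prop :=
  ∀ P₁ P₂ P₂' : ℝ → ℝ, (∀ x : ℝ, x ≠ t₂ j → P₂' x = P₂ x) →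
    HY M₁ M₂ t₁ t₂ P₁ P₂ = HY M₁ M₂ t₁ t₂ P₁ P₂'

/-!
Changing `P₂` at `t₂ j` only changes the two increments of `P₂` adjacent to `t₂ j`, by opposite
amounts. Since the increments of `P₁` are arbitrary, `t₂ j` is nonextant iff the intervals ending
and starting at `t₂ j` overlap the same intervals of the first sequence. For `t₂ j` strictly
between `t₁ (i - 1)` and `t₁ i` both overlap the `i`-th one, so the condition is that neither
extends beyond it: `t₁ (i - 1) ≤ t₂ (j - 1)` and `t₂ (j + 1) ≤ t₁ i`. By asynchrony these
inequalities are strict, and they say that `t₂ j` is neither the first nor the last observation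
of the second sequence between `t₁ (i - 1)` and `t₁ i`.
-/

section Order

variable {α : Type*} [LinearOrder α]

lemma Ioc_inter_Ioc_nonempty_iff {a b c d : α} (hab : a < b) (hcd : c < d) :
    (Set.Ioc a b ∩ Set.Ioc c d).Nonempty ↔ a < d ∧ c < b := by
  simp only [Set.Ioc_inter_Ioc, Set.nonempty_Ioc, max_lt_iff, lt_min_iff, hab, hcd, true_and,
    and_comm]

variable {M : ℕ} {t : ℕ → α}

lemma indicator_Ici_sub_indicator_Ici_pred {R : Type*} [AddGroupWithOne R]
    (ht : StrictMonoOn t (Set.Iic M)) {k l : ℕ} (hk : k ≤ M) (hl : l ∈ Finset.Icc 1 M) :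
    (Set.Ici (t k)).indicator (1 : α → R) (t l) - (Set.Ici (t k)).indicator 1 (t (l - 1)) =
      if l = k then 1 else 0 := by
  rw [Finset.mem_Icc] at hl
  have hle : t k ≤ t l ↔ k ≤ l := ht.le_iff_le hk hl.2
  have hle_pred : t k ≤ t (l - 1) ↔ k ≤ l - 1 := ht.le_iff_le hk ((Nat.sub_le l 1).trans hl.2)
  simp only [Set.indicator_apply, Set.mem_Ici, hle, hle_pred, Pi.one_apply]
  split_ifs <;> first | omega | simp only [sub_self, sub_zero]

lemma isGLB_lt_iff_lt_pred (ht : StrictMonoOn t (Set.Iic M)) {a p : α}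
    (hp : IsGLB {x | ∃ v ≤ M, t v = x ∧ a < x} p) {j : ℕ} (hj₀ : 0 < j) (hj : j ≤ M) :
    p < t j ↔ a < t (j - 1) := by
  have hpred : j - 1 ≤ M := (Nat.sub_le j 1).trans hj
  rw [isGLB_lt_iff hp]
  constructor
  · rintro ⟨_, ⟨v, hv, rfl, hav⟩, hvj⟩
    have hlt : v < j := (ht.lt_iff_lt hv hj).1 hvj
    exact hav.trans_le (ht.monotoneOn hv hpred (Nat.le_sub_one_of_lt hlt))
  · exact fun h => ⟨_, ⟨j - 1, hpred, rfl, h⟩, ht hpred hj (Nat.sub_one_lt_of_lt hj₀)⟩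

lemma lt_isLUB_iff_succ_lt (ht : StrictMonoOn t (Set.Iic M)) {b q : α}
    (hq : IsLUB {x | ∃ v ≤ M, t v = x ∧ x < b} q) {j : ℕ} (hj : j < M) :
    t j < q ↔ t (j + 1) < b := by
  rw [lt_isLUB_iff hq]
  constructor
  · rintro ⟨_, ⟨v, hv, rfl, hvb⟩, hjv⟩
    have hlt : j < v := (ht.lt_iff_lt hj.le hv).1 hjv
    exact (ht.monotoneOn hj hv hlt).trans_lt hvb
  · exact fun h => ⟨_, ⟨j + 1, hj, rfl, h⟩, ht hj.le hj j.lt_succ_self⟩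

lemma Ioc_pred_inter_Ioc_nonempty_iff (ht : StrictMonoOn t (Set.Iic M)) {k : ℕ}
    (hk : k ∈ Finset.Icc 1 M) {c d : α} (hcd : c < d) :
    (Set.Ioc (t (k - 1)) (t k) ∩ Set.Ioc c d).Nonempty ↔ t (k - 1) < d ∧ c < t k := by
  rw [Finset.mem_Icc] at hk
  exact Ioc_inter_Ioc_nonempty_iff
    (ht ((Nat.sub_le k 1).trans hk.2) hk.2 (Nat.sub_one_lt_of_lt hk.1)) hcd

lemma forall_Ioc_overlap_iff_iff_le_and_le (ht : StrictMonoOn t (Set.Iic M)) {i : ℕ}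
    (hi : 1 < i) (hiM : i < M) {u v w : α} (huv : u < v) (hvw : v < w)
    (hv : v ∈ Set.Ioo (t (i - 1)) (t i)) :
    (∀ k ∈ Finset.Icc 1 M, (Set.Ioc (t (k - 1)) (t k) ∩ Set.Ioc u v).Nonempty ↔
        (Set.Ioc (t (k - 1)) (t k) ∩ Set.Ioc v w).Nonempty) ↔
      t (i - 1) ≤ u ∧ w ≤ t i := by
  have hmono : ∀ {k l}, k ≤ l → l ≤ M → t k ≤ t l := fun hkl hl =>
    ht.monotoneOn (hkl.trans hl) hl hkl
  constructor
  · intro h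
    constructor
    · have hmem : i - 1 ∈ Finset.Icc 1 M := Finset.mem_Icc.2 ⟨by omega, by omega⟩
      have hiff := h (i - 1) hmem
      rw [Ioc_pred_inter_Ioc_nonempty_iff ht hmem huv,
        Ioc_pred_inter_Ioc_nonempty_iff ht hmem hvw] at hiff
      by_contra! hu
      have hpred : t (i - 1 - 1) < v := (hmono (Nat.sub_le _ 1) (by omega)).trans_lt hv.1
      exact hv.1.not_gt (hiff.1 ⟨hpred, hu⟩).2
    · have hmem : i + 1 ∈ Finset.Icc 1 M := Finset.mem_Icc.2 ⟨by omega, hiM⟩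
      have hiff := h (i + 1) hmem
      rw [Ioc_pred_inter_Ioc_nonempty_iff ht hmem huv,
        Ioc_pred_inter_Ioc_nonempty_iff ht hmem hvw, Nat.add_sub_cancel] at hiff
      by_contra! hw
      have hsucc : v < t (i + 1) := hv.2.trans_le (hmono i.le_succ hiM)
      exact hv.2.not_gt (hiff.2 ⟨hw, hsucc⟩).1
  · rintro ⟨hu, hw⟩ k hk
    rw [Ioc_pred_inter_Ioc_nonempty_iff ht hk huv, Ioc_pred_inter_Ioc_nonempty_iff ht hk hvw]
    rw [Finset.mem_Icc] at hk
    rcases lt_trichotomy k i with hki | rfl | hik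
    · have hku : t k ≤ u := (hmono (by omega) (by omega)).trans hu
      exact iff_of_false (fun h => h.2.not_ge hku) fun h => h.2.not_ge (hku.trans huv.le)
    · exact iff_of_true ⟨hv.1, huv.trans hv.2⟩ ⟨hv.1.trans hvw, hv.2⟩
    · have hwk : w ≤ t (k - 1) := hw.trans (hmono (by omega) (by omega))
      exact iff_of_false (fun h => h.1.not_ge (hvw.le.trans hwk)) fun h => h.1.not_ge hwk

end Order

section HayashiYoshida

variable {M₁ M₂ : ℕ} {t₁ t₂ : ℕ → ℝ}

lemma chi_eq_chi_iff {i j k l : ℕ} :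
    chi t₁ t₂ i j = chi t₁ t₂ k l ↔
      ((Set.Ioc (t₁ (i - 1)) (t₁ i) ∩ Set.Ioc (t₂ (j - 1)) (t₂ j)).Nonempty ↔
        (Set.Ioc (t₁ (k - 1)) (t₁ k) ∩ Set.Ioc (t₂ (l - 1)) (t₂ l)).Nonempty) := by
  unfold chi
  split_ifs with h h' h' <;> simp only [h, h', one_ne_zero, zero_ne_one, iff_false, iff_true,
    not_true_eq_false]

lemma HY_sub_right (P₁ P₂ P₂' : ℝ → ℝ) :
    HY M₁ M₂ t₁ t₂ P₁ (P₂ - P₂') = HY M₁ M₂ t₁ t₂ P₁ P₂ - HY M₁ M₂ t₁ t₂ P₁ P₂' := by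
  simp only [HY, ← Finset.sum_sub_distrib, Pi.sub_apply]
  exact Finset.sum_congr rfl fun k _ => Finset.sum_congr rfl fun l _ => by ring

lemma HY_single_right (ht₂ : Set.InjOn t₂ (Set.Iic M₂)) {j : ℕ} (hj₀ : 0 < j) (hj : j < M₂)
    (P₁ : ℝ → ℝ) (c : ℝ) :
    HY M₁ M₂ t₁ t₂ P₁ (Pi.single (t₂ j) c) =
      c * ∑ k ∈ Finset.Icc 1 M₁,
        (P₁ (t₁ k) - P₁ (t₁ (k - 1))) * (chi t₁ t₂ k j - chi t₁ t₂ k (j + 1)) := by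
  have hvalue : ∀ l ≤ M₂, (Pi.single (t₂ j) c : ℝ → ℝ) (t₂ l) = if l = j then c else 0 := by
    intro l hl
    simp only [Pi.single_apply, ht₂.eq_iff hl hj.le]
  have hincr : ∀ l ∈ Finset.Icc 1 M₂,
      (Pi.single (t₂ j) c : ℝ → ℝ) (t₂ l) - (Pi.single (t₂ j) c : ℝ → ℝ) (t₂ (l - 1)) =
        (if l = j then c else 0) - if l = j + 1 then c else 0 := by
    intro l hl
    rw [Finset.mem_Icc] at hl
    have hpred : l - 1 = j ↔ l = j + 1 := by omega
    simp only [hvalue l hl.2, hvalue (l - 1) ((Nat.sub_le l 1).trans hl.2), hpred]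
  have hmem : j ∈ Finset.Icc 1 M₂ := Finset.mem_Icc.2 ⟨hj₀, hj.le⟩
  have hmem_succ : j + 1 ∈ Finset.Icc 1 M₂ := Finset.mem_Icc.2 ⟨j.succ_pos, hj⟩
  rw [HY, Finset.mul_sum]
  refine Finset.sum_congr rfl fun k _ => ?_
  rw [Finset.sum_congr rfl fun l hl => by rw [hincr l hl]]
  simp only [mul_sub, sub_mul, mul_ite, ite_mul, mul_zero, zero_mul, Finset.sum_sub_distrib,
    Finset.sum_ite_eq', hmem, hmem_succ, if_true]
  ring

lemma nonextant_iff_HY_single_eq_zero {j : ℕ} :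
    Nonextant M₁ M₂ t₁ t₂ j ↔ ∀ P₁ c, HY M₁ M₂ t₁ t₂ P₁ (Pi.single (t₂ j) c) = 0 := by
  constructor
  · intro h P₁ c
    have hzero : ∀ x, x ≠ t₂ j → (0 : ℝ → ℝ) x = (Pi.single (t₂ j) c : ℝ → ℝ) x :=
      fun x hx => by rw [Pi.single_eq_of_ne hx, Pi.zero_apply]
    rw [h P₁ _ 0 hzero, ← sub_self 0, HY_sub_right, sub_self]
  · intro h P₁ P₂ P₂' hP
    have hsub : P₂ - P₂' = Pi.single (t₂ j) (P₂ (t₂ j) - P₂' (t₂ j)) := by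
      ext x
      by_cases hx : x = t₂ j
      · rw [hx, Pi.single_eq_same, Pi.sub_apply]
      · rw [Pi.single_eq_of_ne hx, Pi.sub_apply, hP x hx, sub_self]
    rw [← sub_eq_zero, ← HY_sub_right, hsub, h]

lemma nonextant_iff_forall_chi_eq (ht₁ : StrictMonoOn t₁ (Set.Iic M₁))
    (ht₂ : Set.InjOn t₂ (Set.Iic M₂)) {j : ℕ} (hj₀ : 0 < j) (hj : j < M₂) :
    Nonextant M₁ M₂ t₁ t₂ j ↔
      ∀ k ∈ Finset.Icc 1 M₁, chi t₁ t₂ k j = chi t₁ t₂ k (j + 1) := by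
  simp only [nonextant_iff_HY_single_eq_zero, HY_single_right ht₂ hj₀ hj]
  constructor
  · intro h k hk
    -- A unit price jump at `t₁ k` isolates the `k`-th term of the sum.
    have hjump := h ((Set.Ici (t₁ k)).indicator 1) 1
    rw [one_mul, Finset.sum_congr rfl fun l hl => by
      rw [indicator_Ici_sub_indicator_Ici_pred ht₁ (Finset.mem_Icc.1 hk).2 hl]] at hjump
    simp only [ite_mul, one_mul, zero_mul, Finset.sum_ite_eq', if_pos hk] at hjump
    exact sub_eq_zero.1 hjump
  · intro h P₁ c
    rw [Finset.sum_eq_zero fun k hk => by rw [h k hk, sub_self, mul_zero], mul_zero]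

lemma nonextant_iff_le_pred_and_succ_le (ht₁ : StrictMonoOn t₁ (Set.Iic M₁))
    (ht₂ : StrictMonoOn t₂ (Set.Iic M₂)) {i j : ℕ} (hi : 1 < i) (hiM : i < M₁) (hj₀ : 0 < j)
    (hj : j < M₂) (hij : t₂ j ∈ Set.Ioo (t₁ (i - 1)) (t₁ i)) :
    Nonextant M₁ M₂ t₁ t₂ j ↔ t₁ (i - 1) ≤ t₂ (j - 1) ∧ t₂ (j + 1) ≤ t₁ i := by
  have hpred : t₂ (j - 1) < t₂ j :=
    ht₂ ((Nat.sub_le j 1).trans hj.le) hj.le (Nat.sub_one_lt_of_lt hj₀)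
  have hsucc : t₂ j < t₂ (j + 1) := ht₂ hj.le hj j.lt_succ_self
  simp only [nonextant_iff_forall_chi_eq ht₁ ht₂.injOn hj₀ hj, chi_eq_chi_iff,
    Nat.add_sub_cancel]
  exact forall_Ioc_overlap_iff_iff_le_and_le ht₁ hi hiM hpred hsucc hij

theorem nonextant_iff_strictly_between_bracketing_points_general
    (ht₁ : StrictMonoOn t₁ (Set.Iic M₁)) (ht₂ : StrictMonoOn t₂ (Set.Iic M₂)) {i j : ℕ}
    (hi : 1 < i) (hiM : i < M₁) (hj₀ : 0 < j) (hj : j < M₂)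
    (hne_pred : t₁ (i - 1) ≠ t₂ (j - 1)) (hne_succ : t₁ i ≠ t₂ (j + 1)) {tp tm : ℝ}
    (htp : IsLeast {x : ℝ | ∃ v ≤ M₂, t₂ v = x ∧ t₁ (i - 1) < x} tp)
    (htm : IsGreatest {x : ℝ | ∃ v ≤ M₂, t₂ v = x ∧ x < t₁ i} tm)
    (hij : t₂ j ∈ Set.Ioo (t₁ (i - 1)) (t₁ i)) :
    Nonextant M₁ M₂ t₁ t₂ j ↔ tp < t₂ j ∧ t₂ j < tm := by
  rw [nonextant_iff_le_pred_and_succ_le ht₁ ht₂ hi hiM hj₀ hj hij, hne_pred.le_iff_lt,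
    hne_succ.symm.le_iff_lt, isGLB_lt_iff_lt_pred ht₂ htp.isGLB hj₀ hj.le,
    lt_isLUB_iff_succ_lt ht₂ htm.isLUB hj]

end HayashiYoshida

/-- Under complete asynchrony and the boundary overlap conditions, fix
`1 < i < M₁`, and let `tp = t²_{(i-1)+}` be the smallest observation time of the
second sequence exceeding `t¹_{i-1}` and `tm = t²_{i-}` the largest one below
`t¹_i`. Then for every `1 < j < M₂ - 1` with `t¹_{i-1} < t²_j < t¹_i`, the point
`t²_j` is nonextant iff `tp < t²_j < tm`. -/
theorem nonextant_iff_strictly_between_bracketing_points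
    (M₁ M₂ : ℕ) (hM₁ : 1 ≤ M₁) (hM₂ : 1 ≤ M₂) (t₁ t₂ : ℕ → ℝ)
    (ht₁ : ∀ i < M₁, t₁ i < t₁ (i + 1)) (ht₂ : ∀ j < M₂, t₂ j < t₂ (j + 1))
    (hasync : ∀ i ≤ M₁, ∀ j ≤ M₂, t₁ i ≠ t₂ j)
    (hinit : max (t₁ 0) (t₂ 0) < min (t₁ 1) (t₂ 1))
    (hterm : max (t₁ (M₁ - 1)) (t₂ (M₂ - 1)) < min (t₁ M₁) (t₂ M₂))
    (i : ℕ) (hi1 : 1 < i) (hi2 : i < M₁)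
    (tp tm : ℝ)
    (htp : IsLeast {x : ℝ | ∃ v ≤ M₂, t₂ v = x ∧ t₁ (i - 1) < x} tp)
    (htm : IsGreatest {x : ℝ | ∃ v ≤ M₂, t₂ v = x ∧ x < t₁ i} tm)
    (j : ℕ) (hj1 : 1 < j) (hj2 : j < M₂ - 1)
    (hbetween : t₁ (i - 1) < t₂ j ∧ t₂ j < t₁ i) :
    Nonextant M₁ M₂ t₁ t₂ j ↔ tp < t₂ j ∧ t₂ j < tm := by
  exact nonextant_iff_strictly_between_bracketing_points_general
    (strictMonoOn_Iic_of_lt_succ ht₁) (strictMonoOn_Iic_of_lt_succ ht₂) hi1 hi2 (by omega)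
    (by omega) (hasync _ (by omega) _ (by omega)) (hasync _ (by omega) _ (by omega)) htp htm
    hbetween
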